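/- Let C be a Barr-exact category, that is: C has finite limits, coequalisers of kernel pairs, regular epimorphisms are stable under pullback, and every equivalence relation in C is effective (is the kernel pair of some morphism). Then every split monomorphism in C is coextensive if and only if every morphism in C is coextensive. -/

import Mathlib

/-!
Suppose that all split monomorphisms satisfy (C1) and that all identities satisfy (C2). The second
condition forces every subobject of the terminal object to be an isomorphism, so that `X ⟶ ⊤_ C` is
a strong epimorphism for every `X`, and hence so is every product projection. Condition (C1) is
stable under composition, and together with (C2) for the identity of the codomain it implies (C2).
As every morphism is its graph, a split monomorphism, followed by a product projection, it suffices
to prove (C1) for a strong epimorphism `f : X₁ ⨯ X₂ ⟶ Y`. Applied to the diagonal of `f`, (C1)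
decomposes the kernel pair of `f` as `K₁ ⨯ K₂`. Here `K₁` relates `a` and `b` precisely when
`f (a, x) = f (b, x)` for all `x`, so it is an equivalence relation on `X₁`, and similarly for `K₂`.
If `g₁` and `g₂` are the corresponding quotients, then `g₁ × g₂` is a strong epimorphism with the
same kernel pair as `f`; therefore `Y` is the product of the two quotients.
-/

open CategoryTheory CategoryTheory.Limits

universe v u

variable {C : Type u} [Category.{v} C]

/-- `i₁ : X₁ ⟶ X` and `i₂ : X₂ ⟶ X` form a binary coproduct diagram. -/
def IsCoprodDiagram {X₁ X₂ X : C} (i₁ : X₁ ⟶ X) (i₂ : X₂ ⟶ X) : Prop :=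
  Nonempty (IsColimit (BinaryCofan.mk i₁ i₂))

/-- `p₁ : X ⟶ X₁` and `p₂ : X ⟶ X₂` form a binary product diagram. -/
def IsProdDiagram {X X₁ X₂ : C} (p₁ : X ⟶ X₁) (p₂ : X ⟶ X₂) : Prop :=
  Nonempty (IsLimit (BinaryFan.mk p₁ p₂))

/-- Condition (E1): pullbacks of `f` along both inclusions of any binary coproduct diagram
exist and the resulting legs form a binary coproduct diagram. -/
def SatE1 {A X : C} (f : A ⟶ X) : Prop :=
  ∀ {X₁ X₂ : C} (x₁ : X₁ ⟶ X) (x₂ : X₂ ⟶ X), IsCoprodDiagram x₁ x₂ →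
    ∃ (A₁ A₂ : C) (a₁ : A₁ ⟶ A) (a₂ : A₂ ⟶ A) (f₁ : A₁ ⟶ X₁) (f₂ : A₂ ⟶ X₂),
      IsPullback a₁ f₁ f x₁ ∧ IsPullback a₂ f₂ f x₂ ∧ IsCoprodDiagram a₁ a₂

/-- Condition (E2): in any commutative diagram over `f` whose rows are binary coproduct
diagrams, both squares are pullbacks. -/
def SatE2 {A X : C} (f : A ⟶ X) : Prop :=
  ∀ {A₁ A₂ X₁ X₂ : C} (a₁ : A₁ ⟶ A) (a₂ : A₂ ⟶ A) (x₁ : X₁ ⟶ X) (x₂ : X₂ ⟶ X)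
    (f₁ : A₁ ⟶ X₁) (f₂ : A₂ ⟶ X₂),
    a₁ ≫ f = f₁ ≫ x₁ → a₂ ≫ f = f₂ ≫ x₂ →
    IsCoprodDiagram x₁ x₂ → IsCoprodDiagram a₁ a₂ →
    IsPullback a₁ f₁ f x₁ ∧ IsPullback a₂ f₂ f x₂

/-- A morphism is extensive if it satisfies (E1) and (E2). -/
def Extensive {A X : C} (f : A ⟶ X) : Prop := SatE1 f ∧ SatE2 f

/-- Condition (C1): pushouts of `f` along both projections of any binary product diagram
exist and the resulting legs form a binary product diagram. -/
def SatC1 {A X : C} (f : A ⟶ X) : Prop :=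
  ∀ {A₁ A₂ : C} (p₁ : A ⟶ A₁) (p₂ : A ⟶ A₂), IsProdDiagram p₁ p₂ →
    ∃ (X₁ X₂ : C) (q₁ : X ⟶ X₁) (q₂ : X ⟶ X₂) (f₁ : A₁ ⟶ X₁) (f₂ : A₂ ⟶ X₂),
      IsPushout p₁ f f₁ q₁ ∧ IsPushout p₂ f f₂ q₂ ∧ IsProdDiagram q₁ q₂

/-- Condition (C2): in any commutative diagram over `f` whose rows are binary product
diagrams, both squares are pushouts. -/
def SatC2 {A X : C} (f : A ⟶ X) : Prop :=
  ∀ {A₁ A₂ X₁ X₂ : C} (p₁ : A ⟶ A₁) (p₂ : A ⟶ A₂) (q₁ : X ⟶ X₁) (q₂ : X ⟶ X₂)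
    (f₁ : A₁ ⟶ X₁) (f₂ : A₂ ⟶ X₂),
    p₁ ≫ f₁ = f ≫ q₁ → p₂ ≫ f₂ = f ≫ q₂ →
    IsProdDiagram p₁ p₂ → IsProdDiagram q₁ q₂ →
    IsPushout p₁ f f₁ q₁ ∧ IsPushout p₂ f f₂ q₂

/-- A morphism is coextensive if it satisfies (C1) and (C2). -/
def Coextensive {A X : C} (f : A ⟶ X) : Prop := SatC1 f ∧ SatC2 f

/-- A coproduct inclusion: a morphism admitting a complementary inclusion forming
a binary coproduct diagram. -/
def IsCoprodInclusion {A X : C} (ι : A ⟶ X) : Prop :=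
  ∃ (A' : C) (ι' : A' ⟶ X), IsCoprodDiagram ι ι'

/-- An extremal epimorphism: whenever `e = i ≫ m` with `m` a monomorphism, `m` is an
isomorphism. -/
def IsExtremalEpi {A B : C} (e : A ⟶ B) : Prop :=
  ∀ {I : C} (i : A ⟶ I) (m : I ⟶ B), Mono m → i ≫ m = e → IsIso m

/-- The binary strict refinement property for an object `X`. -/
def BinaryStrictRefinement (X : C) : Prop :=
  ∀ {A₁ A₂ B₁ B₂ : C} (a₁ : X ⟶ A₁) (a₂ : X ⟶ A₂) (b₁ : X ⟶ B₁) (b₂ : X ⟶ B₂),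
    IsProdDiagram a₁ a₂ → IsProdDiagram b₁ b₂ →
    ∃ (C₁₁ C₁₂ C₂₁ C₂₂ : C)
      (α₁₁ : A₁ ⟶ C₁₁) (α₁₂ : A₁ ⟶ C₁₂) (α₂₁ : A₂ ⟶ C₂₁) (α₂₂ : A₂ ⟶ C₂₂)
      (β₁₁ : B₁ ⟶ C₁₁) (β₁₂ : B₂ ⟶ C₁₂) (β₂₁ : B₁ ⟶ C₂₁) (β₂₂ : B₂ ⟶ C₂₂),
      a₁ ≫ α₁₁ = b₁ ≫ β₁₁ ∧ a₁ ≫ α₁₂ = b₂ ≫ β₁₂ ∧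
      a₂ ≫ α₂₁ = b₁ ≫ β₂₁ ∧ a₂ ≫ α₂₂ = b₂ ≫ β₂₂ ∧
      IsProdDiagram α₁₁ α₁₂ ∧ IsProdDiagram α₂₁ α₂₂ ∧
      IsProdDiagram β₁₁ β₂₁ ∧ IsProdDiagram β₁₂ β₂₂

/-- A jointly monomorphic pair which is a reflexive, symmetric and transitive relation. -/
def IsEquivalenceRelationPair {R X : C} (r₁ r₂ : R ⟶ X) : Prop :=
  (∀ {T : C} (a b : T ⟶ R), a ≫ r₁ = b ≫ r₁ → a ≫ r₂ = b ≫ r₂ → a = b) ∧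
  (∃ d : X ⟶ R, d ≫ r₁ = 𝟙 X ∧ d ≫ r₂ = 𝟙 X) ∧
  (∃ s : R ⟶ R, s ≫ r₁ = r₂ ∧ s ≫ r₂ = r₁) ∧
  (∀ {P : C} (p₁ p₂ : P ⟶ R), IsPullback p₁ p₂ r₂ r₁ →
    ∃ t : P ⟶ R, t ≫ r₁ = p₁ ≫ r₁ ∧ t ≫ r₂ = p₂ ≫ r₂)

namespace IsProdDiagram

section Basic

variable {X Y X₁ X₂ T : C} {p₁ : X ⟶ X₁} {p₂ : X ⟶ X₂}

lemma swap (h : IsProdDiagram p₁ p₂) : IsProdDiagram p₂ p₁ :=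
  ⟨BinaryFan.isLimitFlip h.some⟩

lemma prod (X Y : C) [HasBinaryProduct X Y] :
    IsProdDiagram (prod.fst : X ⨯ Y ⟶ X) (prod.snd : X ⨯ Y ⟶ Y) :=
  ⟨prodIsProd X Y⟩

lemma iso_comp (h : IsProdDiagram p₁ p₂) (e : Y ≅ X) :
    IsProdDiagram (e.hom ≫ p₁) (e.hom ≫ p₂) :=
  ⟨IsLimit.ofIsoLimit h.some (BinaryFan.ext e.symm (by simp) (by simp))⟩

lemma hom_ext (h : IsProdDiagram p₁ p₂) {a b : T ⟶ X} (h₁ : a ≫ p₁ = b ≫ p₁)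
    (h₂ : a ≫ p₂ = b ≫ p₂) : a = b :=
  BinaryFan.IsLimit.hom_ext h.some h₁ h₂

/-- The morphism into the vertex of a binary product diagram with prescribed components. -/
noncomputable def lift (h : IsProdDiagram p₁ p₂) (a : T ⟶ X₁) (b : T ⟶ X₂) : T ⟶ X :=
  BinaryFan.IsLimit.lift h.some a b

@[simp]
lemma lift_fst (h : IsProdDiagram p₁ p₂) (a : T ⟶ X₁) (b : T ⟶ X₂) : h.lift a b ≫ p₁ = a :=
  BinaryFan.IsLimit.lift_fst h.some a b

@[simp]
lemma lift_snd (h : IsProdDiagram p₁ p₂) (a : T ⟶ X₁) (b : T ⟶ X₂) : h.lift a b ≫ p₂ = b :=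
  BinaryFan.IsLimit.lift_snd h.some a b

lemma iff_isPullback [HasTerminal C] :
    IsProdDiagram p₁ p₂ ↔ IsPullback p₁ p₂ (terminal.from X₁) (terminal.from X₂) :=
  ⟨fun h => .of_is_product' h.some terminalIsTerminal, fun h =>
    ⟨BinaryFan.IsLimit.mk _ (fun a b => h.lift a b (Subsingleton.elim _ _))
      (fun _ _ => h.lift_fst _ _ _) (fun _ _ => h.lift_snd _ _ _)
      (fun _ _ _ h₁ h₂ => h.hom_ext (by simpa using h₁) (by simpa using h₂))⟩⟩

end Basic

section Map

variable [HasBinaryProducts C] {X X₁ X₂ T S : C} {p₁ : X ⟶ X₁} {p₂ : X ⟶ X₂}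

/-- The product `a × b` of two morphisms, as a morphism from the chosen product `T ⨯ S` to the
vertex of a given binary product diagram. -/
noncomputable def map (h : IsProdDiagram p₁ p₂) (a : T ⟶ X₁) (b : S ⟶ X₂) : T ⨯ S ⟶ X :=
  h.lift (prod.fst ≫ a) (prod.snd ≫ b)

@[simp]
lemma map_fst (h : IsProdDiagram p₁ p₂) (a : T ⟶ X₁) (b : S ⟶ X₂) :
    h.map a b ≫ p₁ = prod.fst ≫ a :=
  h.lift_fst _ _

@[simp]
lemma map_snd (h : IsProdDiagram p₁ p₂) (a : T ⟶ X₁) (b : S ⟶ X₂) :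
    h.map a b ≫ p₂ = prod.snd ≫ b :=
  h.lift_snd _ _

lemma map_comp {K K₁ K₂ : C} {k₁ : K ⟶ K₁} {k₂ : K ⟶ K₂} (hk : IsProdDiagram k₁ k₂)
    (hp : IsProdDiagram p₁ p₂) {r : K ⟶ X} {r₁ : K₁ ⟶ X₁} {r₂ : K₂ ⟶ X₂}
    (h₁ : r ≫ p₁ = k₁ ≫ r₁) (h₂ : r ≫ p₂ = k₂ ≫ r₂) (a : T ⟶ K₁) (b : S ⟶ K₂) :
    hk.map a b ≫ r = hp.map (a ≫ r₁) (b ≫ r₂) :=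
  hp.hom_ext (by simp [h₁, reassoc_of% hk.map_fst]) (by simp [h₂, reassoc_of% hk.map_snd])

end Map

section Pullback

lemma isPullback_of_comp_snd_eq [HasTerminal C] {X Y X₁ Y₁ Z : C} {p₁ : X ⟶ X₁} {p₂ : X ⟶ Z}
    {q₁ : Y ⟶ Y₁} {q₂ : Y ⟶ Z} (hp : IsProdDiagram p₁ p₂) (hq : IsProdDiagram q₁ q₂)
    {f : X ⟶ Y} {g : X₁ ⟶ Y₁} (h₁ : f ≫ q₁ = p₁ ≫ g) (h₂ : f ≫ q₂ = p₂) :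
    IsPullback f p₁ q₁ g := by
  refine .of_right ?_ h₁ (iff_isPullback.1 hq).flip
  simpa [h₂] using (iff_isPullback.1 hp).flip

lemma isPullback {P P₁ P₂ X X₁ X₂ Y Y₁ Y₂ Z Z₁ Z₂ : C}
    {π₁ : P ⟶ P₁} {π₂ : P ⟶ P₂} {p₁ : X ⟶ X₁} {p₂ : X ⟶ X₂} {q₁ : Y ⟶ Y₁} {q₂ : Y ⟶ Y₂}
    {z₁ : Z ⟶ Z₁} {z₂ : Z ⟶ Z₂} (hP : IsProdDiagram π₁ π₂) (hX : IsProdDiagram p₁ p₂)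
    (hY : IsProdDiagram q₁ q₂) (hZ : IsProdDiagram z₁ z₂)
    {a : P ⟶ X} {a₁ : P₁ ⟶ X₁} {a₂ : P₂ ⟶ X₂} {b : P ⟶ Y} {b₁ : P₁ ⟶ Y₁} {b₂ : P₂ ⟶ Y₂}
    {f : X ⟶ Z} {f₁ : X₁ ⟶ Z₁} {f₂ : X₂ ⟶ Z₂} {g : Y ⟶ Z} {g₁ : Y₁ ⟶ Z₁} {g₂ : Y₂ ⟶ Z₂}
    (ha₁ : a ≫ p₁ = π₁ ≫ a₁) (ha₂ : a ≫ p₂ = π₂ ≫ a₂)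
    (hb₁ : b ≫ q₁ = π₁ ≫ b₁) (hb₂ : b ≫ q₂ = π₂ ≫ b₂)
    (hf₁ : f ≫ z₁ = p₁ ≫ f₁) (hf₂ : f ≫ z₂ = p₂ ≫ f₂)
    (hg₁ : g ≫ z₁ = q₁ ≫ g₁) (hg₂ : g ≫ z₂ = q₂ ≫ g₂)
    (h₁ : IsPullback a₁ b₁ f₁ g₁) (h₂ : IsPullback a₂ b₂ f₂ g₂) : IsPullback a b f g := by
  refine .mk' (hZ.hom_ext ?_ ?_) (fun T φ ψ hφa hφb => hP.hom_ext ?_ ?_) fun T u v huv => ?_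
  · simp only [Category.assoc, hf₁, hg₁, reassoc_of% ha₁, reassoc_of% hb₁, h₁.w]
  · simp only [Category.assoc, hf₂, hg₂, reassoc_of% ha₂, reassoc_of% hb₂, h₂.w]
  · refine h₁.hom_ext ?_ ?_
    · simp only [Category.assoc, ← ha₁, reassoc_of% hφa]
    · simp only [Category.assoc, ← hb₁, reassoc_of% hφb]
  · refine h₂.hom_ext ?_ ?_
    · simp only [Category.assoc, ← ha₂, reassoc_of% hφa]
    · simp only [Category.assoc, ← hb₂, reassoc_of% hφb]
  · have w₁ : (u ≫ p₁) ≫ f₁ = (v ≫ q₁) ≫ g₁ := by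
      simp only [Category.assoc, ← hf₁, ← hg₁, reassoc_of% huv]
    have w₂ : (u ≫ p₂) ≫ f₂ = (v ≫ q₂) ≫ g₂ := by
      simp only [Category.assoc, ← hf₂, ← hg₂, reassoc_of% huv]
    let l := hP.lift (h₁.lift _ _ w₁) (h₂.lift _ _ w₂)
    have hl₁ : l ≫ π₁ = h₁.lift _ _ w₁ := hP.lift_fst _ _
    have hl₂ : l ≫ π₂ = h₂.lift _ _ w₂ := hP.lift_snd _ _
    exact ⟨l, hX.hom_ext (by simp [ha₁, reassoc_of% hl₁]) (by simp [ha₂, reassoc_of% hl₂]),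
      hY.hom_ext (by simp [hb₁, reassoc_of% hl₁]) (by simp [hb₂, reassoc_of% hl₂])⟩

end Pullback

end IsProdDiagram

section Composition

variable {A X Y : C} {f : A ⟶ X} {g : X ⟶ Y}

lemma SatC1.comp (hf : SatC1 f) (hg : SatC1 g) : SatC1 (f ≫ g) := fun p₁ p₂ hp => by
  obtain ⟨X₁, X₂, q₁, q₂, f₁, f₂, s₁, s₂, hq⟩ := hf p₁ p₂ hp
  obtain ⟨Y₁, Y₂, r₁, r₂, g₁, g₂, t₁, t₂, hr⟩ := hg q₁ q₂ hq
  exact ⟨Y₁, Y₂, r₁, r₂, f₁ ≫ g₁, f₂ ≫ g₂, s₁.paste_vert t₁, s₂.paste_vert t₂, hr⟩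

lemma SatC1.comp_satC2 (hf : SatC1 f) (hg : SatC2 g) : SatC2 (f ≫ g) :=
  fun p₁ p₂ r₁ r₂ h₁ h₂ w₁ w₂ hp hr => by
    obtain ⟨X₁, X₂, q₁, q₂, f₁, f₂, s₁, s₂, hq⟩ := hf p₁ p₂ hp
    obtain ⟨t₁, t₂⟩ := hg q₁ q₂ r₁ r₂ (s₁.desc h₁ (g ≫ r₁) (by simpa using w₁))
      (s₂.desc h₂ (g ≫ r₂) (by simpa using w₂)) (by simp) (by simp) hq hr
    exact ⟨by simpa using s₁.paste_vert t₁, by simpa using s₂.paste_vert t₂⟩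

lemma SatC1.coextensive (hf : SatC1 f) (hid : SatC2 (𝟙 X)) : Coextensive f :=
  have h : SatC2 (f ≫ 𝟙 X) := SatC1.comp_satC2 hf hid
  ⟨hf, by rwa [Category.comp_id] at h⟩

end Composition

section Relations

/-- The hypothesis says that `R` represents the kernel of the function `Φ` on generalized
elements. -/
lemma isEquivalenceRelationPair_of_factors_iff_eq {R X : C} {r₁ r₂ : R ⟶ X}
    [hr : JointlyMono₂ r₁ r₂] {S : C → Type*} (Φ : ∀ {T : C}, (T ⟶ X) → S T)
    (h : ∀ {T : C} (a b : T ⟶ X), (∃ t : T ⟶ R, t ≫ r₁ = a ∧ t ≫ r₂ = b) ↔ Φ a = Φ b) :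
    IsEquivalenceRelationPair r₁ r₂ := by
  have hR : Φ r₁ = Φ r₂ := (h r₁ r₂).1 ⟨𝟙 R, Category.id_comp _, Category.id_comp _⟩
  refine ⟨fun a b => hr.right_cancellation a b, (h _ _).2 rfl, (h _ _).2 hR.symm,
    fun a b hab => (h _ _).2 ?_⟩
  calc
    Φ (a ≫ r₁) = Φ (a ≫ r₂) := (h _ _).1 ⟨a, rfl, rfl⟩
    _ = Φ (b ≫ r₁) := by rw [hab.w]
    _ = Φ (b ≫ r₂) := (h _ _).1 ⟨b, rfl, rfl⟩

lemma exists_factor_of_strongEpi [HasBinaryProducts C] {P Q R X₁ X₂ : C} (e : P ⟶ Q) [StrongEpi e]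
    {r₁ : R ⟶ X₁} {r₂ : R ⟶ X₂} [hr : JointlyMono₂ r₁ r₂] (x : P ⟶ R) {a : Q ⟶ X₁} {b : Q ⟶ X₂}
    (ha : x ≫ r₁ = e ≫ a) (hb : x ≫ r₂ = e ≫ b) :
    ∃ t : Q ⟶ R, t ≫ r₁ = a ∧ t ≫ r₂ = b := by
  have : Mono (prod.lift r₁ r₂) := ⟨fun u v h => hr.right_cancellation u v
    (by simpa [prod.lift_fst] using h =≫ prod.fst) (by simpa [prod.lift_snd] using h =≫ prod.snd)⟩
  have sq : CommSq x e (prod.lift r₁ r₂) (prod.lift a b) := ⟨by ext <;> simp [ha, hb]⟩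
  exact ⟨sq.lift, by simpa [prod.lift_fst] using sq.fac_right =≫ prod.fst,
    by simpa [prod.lift_snd] using sq.fac_right =≫ prod.snd⟩

end Relations

section KernelPairs

lemma isPushout_of_epi_of_isKernelPair {K X Y K' X' Y' : C} {f : X ⟶ Y} [Epi f]
    {f' : X' ⟶ Y'} [IsRegularEpi f'] {r s : K ⟶ X} {r' s' : K' ⟶ X'} (hf : r ≫ f = s ≫ f)
    (hf' : IsKernelPair f' r' s') {k : K ⟶ K'} [Epi k] {p : X ⟶ X'} {q : Y ⟶ Y'}
    (hr : r ≫ p = k ≫ r') (hs : s ≫ p = k ≫ s') (w : p ≫ f' = f ≫ q) : IsPushout p f f' q := by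
  refine .mk' w (fun T u v h _ => (cancel_epi f').1 h) fun T u v huv => ?_
  have hu : r' ≫ u = s' ≫ u := by
    rw [← cancel_epi k, ← reassoc_of% hr, ← reassoc_of% hs, huv, reassoc_of% hf]
  obtain ⟨t, ht⟩ := IsRegularEpi.exists_of_isKernelPair f' hf' u hu
  exact ⟨t, ht, by rw [← cancel_epi f, ← reassoc_of% w, ht, huv]⟩

lemma exists_iso_of_isKernelPair {K X Y Z : C} {f : X ⟶ Y} {g : X ⟶ Z} [IsRegularEpi f]
    [IsRegularEpi g] {r s : K ⟶ X} (hf : IsKernelPair f r s) (hg : IsKernelPair g r s) :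
    ∃ e : Y ≅ Z, f ≫ e.hom = g :=
  ⟨hf.toCoequalizer'.coconePointUniqueUpToIso hg.toCoequalizer',
    hf.toCoequalizer'.comp_coconePointUniqueUpToIso_hom hg.toCoequalizer' WalkingParallelPair.one⟩

end KernelPairs

lemma isIso_terminal_from_of_satC2_id [HasTerminal C] {X : C} (hX : SatC2 (𝟙 X))
    [Mono (terminal.from X)] : IsIso (terminal.from X) := by
  have h₁ : IsProdDiagram (𝟙 X) (𝟙 X) :=
    IsProdDiagram.iff_isPullback.2 (IsKernelPair.id_of_mono _)
  have h₂ : IsProdDiagram (𝟙 X) (terminal.from X) :=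
    IsProdDiagram.iff_isPullback.2
      (Subsingleton.elim (𝟙 (⊤_ C)) (terminal.from _) ▸ IsPullback.id_horiz (terminal.from X))
  exact (hX (𝟙 X) (𝟙 X) (𝟙 X) (terminal.from X) (𝟙 X) (terminal.from X)
    (by simp) (by simp) h₁ h₂).2.isIso_inl_of_isIso

section Regular

variable [Regular C]

lemma strongEpi_fst_of_isPullback {P X Y Z : C} {fst : P ⟶ X} {snd : P ⟶ Y} {f : X ⟶ Z}
    {g : Y ⟶ Z} (h : IsPullback fst snd f g) [StrongEpi g] : StrongEpi fst := by
  have : IsRegularEpi fst := Regular.regularEpiIsStableUnderBaseChange.of_isPullback h.flip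
    (inferInstanceAs (IsRegularEpi g))
  infer_instance

lemma exists_strongEpi_isKernelPair_of_isKernelPair {R X Y : C} {r₁ r₂ : R ⟶ X} {f : X ⟶ Y}
    (h : IsKernelPair f r₁ r₂) :
    ∃ (Z : C) (g : X ⟶ Z), StrongEpi g ∧ IsKernelPair g r₁ r₂ := by
  have : HasCoequalizer r₁ r₂ := Regular.hasCoequalizer_of_isKernelPair h
  refine ⟨_, coequalizer.π r₁ r₂, inferInstance, ?_⟩
  exact IsKernelPair.cancel_right (f₂ := coequalizer.desc f h.w) (coequalizer.condition r₁ r₂)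
    (by simpa using h)

lemma strongEpi_terminal_from (hid : ∀ X : C, SatC2 (𝟙 X)) (X : C) :
    StrongEpi (terminal.from X) := by
  let F := Regular.strongEpiMonoFactorisation (terminal.from X)
  have : Mono (terminal.from F.I) := Subsingleton.elim F.m (terminal.from F.I) ▸ F.m_mono
  have := isIso_terminal_from_of_satC2_id (hid F.I)
  rw [← Subsingleton.elim (F.e ≫ terminal.from F.I) (terminal.from X)]
  infer_instance

namespace IsProdDiagram

variable {X X₁ X₂ Y Y₁ Y₂ K K₁ K₂ : C} {p₁ : X ⟶ X₁} {p₂ : X ⟶ X₂} {q₁ : Y ⟶ Y₁} {q₂ : Y ⟶ Y₂}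
  {k₁ : K ⟶ K₁} {k₂ : K ⟶ K₂}

lemma strongEpi_fst (h : IsProdDiagram p₁ p₂) [StrongEpi (terminal.from X₂)] : StrongEpi p₁ :=
  strongEpi_fst_of_isPullback (iff_isPullback.1 h)

lemma strongEpi_of_comp_eq (hp : IsProdDiagram p₁ p₂) (hq : IsProdDiagram q₁ q₂) {f : X ⟶ Y}
    {f₁ : X₁ ⟶ Y₁} {f₂ : X₂ ⟶ Y₂} (h₁ : f ≫ q₁ = p₁ ≫ f₁) (h₂ : f ≫ q₂ = p₂ ≫ f₂)
    [StrongEpi f₁] [StrongEpi f₂] : StrongEpi f := by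
  have hY₁X₂ := IsProdDiagram.prod Y₁ X₂
  have : StrongEpi (prod.lift (p₁ ≫ f₁) p₂) := strongEpi_fst_of_isPullback
    (hp.isPullback_of_comp_snd_eq hY₁X₂ (prod.lift_fst _ _) (prod.lift_snd _ _))
  have : StrongEpi (hq.map (𝟙 Y₁) f₂) := strongEpi_fst_of_isPullback
    (hY₁X₂.swap.isPullback_of_comp_snd_eq hq.swap (hq.map_snd _ _) (by simp))
  have : f = prod.lift (p₁ ≫ f₁) p₂ ≫ hq.map (𝟙 Y₁) f₂ :=
    hq.hom_ext (by simp [h₁, prod.lift_fst]) (by simp [h₂, prod.lift_snd_assoc])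
  exact this ▸ strongEpi_comp _ _

section Relations

variable {f : X ⟶ Y} {r s : K ⟶ X} {r₁ s₁ : K₁ ⟶ X₁} {r₂ s₂ : K₂ ⟶ X₂} {d₂ : X₂ ⟶ K₂}
  [StrongEpi (terminal.from X₂)]

lemma jointlyMono₂ (hp : IsProdDiagram p₁ p₂) (hk : IsProdDiagram k₁ k₂) [hrs : JointlyMono₂ r s]
    (hr₁ : r ≫ p₁ = k₁ ≫ r₁) (hr₂ : r ≫ p₂ = k₂ ≫ r₂)
    (hs₁ : s ≫ p₁ = k₁ ≫ s₁) (hs₂ : s ≫ p₂ = k₂ ≫ s₂) (d₂ : X₂ ⟶ K₂) : JointlyMono₂ r₁ s₁ where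
  right_cancellation T a b har has := by
    have : StrongEpi (prod.fst : T ⨯ X₂ ⟶ T) := (IsProdDiagram.prod T X₂).strongEpi_fst
    have hab : hk.map a d₂ = hk.map b d₂ := hrs.right_cancellation _ _
      (by rw [map_comp hk hp hr₁ hr₂, map_comp hk hp hr₁ hr₂, har])
      (by rw [map_comp hk hp hs₁ hs₂, map_comp hk hp hs₁ hs₂, has])
    rw [← cancel_epi (prod.fst : T ⨯ X₂ ⟶ T), ← hk.map_fst a d₂, hab, hk.map_fst]

lemma factors_iff_map_comp_eq (hp : IsProdDiagram p₁ p₂) (hk : IsProdDiagram k₁ k₂)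
    (hK : IsKernelPair f r s) [JointlyMono₂ r₁ s₁]
    (hr₁ : r ≫ p₁ = k₁ ≫ r₁) (hr₂ : r ≫ p₂ = k₂ ≫ r₂)
    (hs₁ : s ≫ p₁ = k₁ ≫ s₁) (hs₂ : s ≫ p₂ = k₂ ≫ s₂)
    (hdr₂ : d₂ ≫ r₂ = 𝟙 X₂) (hds₂ : d₂ ≫ s₂ = 𝟙 X₂) {T : C} (a b : T ⟶ X₁) :
    (∃ t : T ⟶ K₁, t ≫ r₁ = a ∧ t ≫ s₁ = b) ↔ hp.map a (𝟙 X₂) ≫ f = hp.map b (𝟙 X₂) ≫ f := by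
  constructor
  · rintro ⟨t, rfl, rfl⟩
    have hr : hk.map t d₂ ≫ r = hp.map (t ≫ r₁) (𝟙 X₂) := hdr₂ ▸ map_comp hk hp hr₁ hr₂ t d₂
    have hs : hk.map t d₂ ≫ s = hp.map (t ≫ s₁) (𝟙 X₂) := hds₂ ▸ map_comp hk hp hs₁ hs₂ t d₂
    rw [← hr, ← hs, Category.assoc, Category.assoc, hK.w]
  · intro h
    have : StrongEpi (prod.fst : T ⨯ X₂ ⟶ T) := (IsProdDiagram.prod T X₂).strongEpi_fst
    exact exists_factor_of_strongEpi prod.fst (hK.lift _ _ h ≫ k₁)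
      (by simp [← hr₁]) (by simp [← hs₁])

lemma isEquivalenceRelationPair (hp : IsProdDiagram p₁ p₂) (hk : IsProdDiagram k₁ k₂)
    (hK : IsKernelPair f r s) (hr₁ : r ≫ p₁ = k₁ ≫ r₁) (hr₂ : r ≫ p₂ = k₂ ≫ r₂)
    (hs₁ : s ≫ p₁ = k₁ ≫ s₁) (hs₂ : s ≫ p₂ = k₂ ≫ s₂)
    (hdr₂ : d₂ ≫ r₂ = 𝟙 X₂) (hds₂ : d₂ ≫ s₂ = 𝟙 X₂) : IsEquivalenceRelationPair r₁ s₁ := by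
  have : JointlyMono₂ r s := ⟨fun _ _ _ h₁ h₂ => hK.hom_ext h₁ h₂⟩
  have := hp.jointlyMono₂ hk hr₁ hr₂ hs₁ hs₂ d₂
  exact isEquivalenceRelationPair_of_factors_iff_eq (fun a => hp.map a (𝟙 X₂) ≫ f)
    (hp.factors_iff_map_comp_eq hk hK hr₁ hr₂ hs₁ hs₂ hdr₂ hds₂)

end Relations

lemma exists_isProdDiagram_of_isKernelPair (hp : IsProdDiagram p₁ p₂) (hk : IsProdDiagram k₁ k₂)
    {f : X ⟶ Y} [StrongEpi f] {g₁ : X₁ ⟶ Y₁} [StrongEpi g₁] {g₂ : X₂ ⟶ Y₂} [StrongEpi g₂]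
    {r s : K ⟶ X} {r₁ s₁ : K₁ ⟶ X₁} {r₂ s₂ : K₂ ⟶ X₂} (hf : IsKernelPair f r s)
    (hg₁ : IsKernelPair g₁ r₁ s₁) (hg₂ : IsKernelPair g₂ r₂ s₂)
    (hr₁ : r ≫ p₁ = k₁ ≫ r₁) (hr₂ : r ≫ p₂ = k₂ ≫ r₂)
    (hs₁ : s ≫ p₁ = k₁ ≫ s₁) (hs₂ : s ≫ p₂ = k₂ ≫ s₂) :
    ∃ (q₁ : Y ⟶ Y₁) (q₂ : Y ⟶ Y₂),
      p₁ ≫ g₁ = f ≫ q₁ ∧ p₂ ≫ g₂ = f ≫ q₂ ∧ IsProdDiagram q₁ q₂ := by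
  have hY := IsProdDiagram.prod Y₁ Y₂
  let g : X ⟶ Y₁ ⨯ Y₂ := prod.lift (p₁ ≫ g₁) (p₂ ≫ g₂)
  have hgp₁ : g ≫ prod.fst = p₁ ≫ g₁ := prod.lift_fst _ _
  have hgp₂ : g ≫ prod.snd = p₂ ≫ g₂ := prod.lift_snd _ _
  have : StrongEpi g := hp.strongEpi_of_comp_eq hY hgp₁ hgp₂
  have hg : IsKernelPair g r s :=
    hk.isPullback hp hp hY hr₁ hr₂ hs₁ hs₂ hgp₁ hgp₂ hgp₁ hgp₂ hg₁ hg₂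
  obtain ⟨e, he⟩ := exists_iso_of_isKernelPair hf hg
  exact ⟨_, _, by rw [reassoc_of% he, hgp₁], by rw [reassoc_of% he, hgp₂], hY.iso_comp e⟩

end IsProdDiagram

end Regular

/-- A Barr-exact category: a regular category in which every equivalence relation is effective. -/
class BarrExact (C : Type u) [Category.{v} C] : Prop extends Regular C where
  exists_isKernelPair {R X : C} {r₁ r₂ : R ⟶ X} :
    IsEquivalenceRelationPair r₁ r₂ → ∃ (Y : C) (f : X ⟶ Y), IsKernelPair f r₁ r₂

section BarrExact

variable [BarrExact C]

lemma IsEquivalenceRelationPair.exists_strongEpi_isKernelPair {R X : C} {r₁ r₂ : R ⟶ X}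
    (h : IsEquivalenceRelationPair r₁ r₂) :
    ∃ (Y : C) (g : X ⟶ Y), StrongEpi g ∧ IsKernelPair g r₁ r₂ :=
  let ⟨_, _, hf⟩ := BarrExact.exists_isKernelPair h
  exists_strongEpi_isKernelPair_of_isKernelPair hf

variable [∀ X : C, StrongEpi (terminal.from X)]

lemma satC1_of_satC1_diagonal {X Y : C} (f : X ⟶ Y) [StrongEpi f]
    (hdiag : SatC1 (pullback.diagonal f)) : SatC1 f := fun {X₁ X₂} p₁ p₂ hp => by
  have hf := IsKernelPair.of_hasPullback f
  obtain ⟨K₁, K₂, k₁, k₂, d₁, d₂, sq₁, sq₂, hk⟩ := hdiag p₁ p₂ hp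
  obtain ⟨r₁, hdr₁, hr₁⟩ := sq₁.exists_desc (𝟙 X₁) (pullback.fst f f ≫ p₁) (by simp)
  obtain ⟨s₁, hds₁, hs₁⟩ := sq₁.exists_desc (𝟙 X₁) (pullback.snd f f ≫ p₁) (by simp)
  obtain ⟨r₂, hdr₂, hr₂⟩ := sq₂.exists_desc (𝟙 X₂) (pullback.fst f f ≫ p₂) (by simp)
  obtain ⟨s₂, hds₂, hs₂⟩ := sq₂.exists_desc (𝟙 X₂) (pullback.snd f f ≫ p₂) (by simp)
  obtain ⟨Y₁, g₁, _, hg₁⟩ := (hp.isEquivalenceRelationPair hk hf hr₁.symm hr₂.symm hs₁.symm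
    hs₂.symm hdr₂ hds₂).exists_strongEpi_isKernelPair
  obtain ⟨Y₂, g₂, _, hg₂⟩ := (hp.swap.isEquivalenceRelationPair hk.swap hf hr₂.symm hr₁.symm
    hs₂.symm hs₁.symm hdr₁ hds₁).exists_strongEpi_isKernelPair
  obtain ⟨q₁, q₂, w₁, w₂, hq⟩ := hp.exists_isProdDiagram_of_isKernelPair hk hf hg₁ hg₂
    hr₁.symm hr₂.symm hs₁.symm hs₂.symm
  have : StrongEpi k₁ := hk.strongEpi_fst
  have : StrongEpi k₂ := hk.swap.strongEpi_fst
  exact ⟨Y₁, Y₂, q₁, q₂, g₁, g₂,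
    isPushout_of_epi_of_isKernelPair hf.w hg₁ hr₁.symm hs₁.symm w₁,
    isPushout_of_epi_of_isKernelPair hf.w hg₂ hr₂.symm hs₂.symm w₂, hq⟩

lemma satC1_of_satC1_splitMono (hsplit : ∀ {A B : C} (m : A ⟶ B), IsSplitMono m → SatC1 m)
    {A B : C} (f : A ⟶ B) : SatC1 f := by
  have : StrongEpi (prod.snd : A ⨯ B ⟶ B) := (IsProdDiagram.prod A B).swap.strongEpi_fst
  have hgraph : SatC1 (prod.lift (𝟙 A) f) := hsplit _ (.mk' ⟨prod.fst, prod.lift_fst _ _⟩)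
  have hsnd : SatC1 (prod.snd : A ⨯ B ⟶ B) :=
    satC1_of_satC1_diagonal _ (hsplit _ inferInstance)
  have hcomp : SatC1 (prod.lift (𝟙 A) f ≫ prod.snd) := SatC1.comp hgraph hsnd
  rwa [prod.lift_snd] at hcomp

end BarrExact

/-- In a Barr-exact category, every split monomorphism is coextensive iff every
morphism is coextensive. -/
theorem barrExact_splitMono_coextensive_iff_coextensive [HasFiniteLimits C]
    (hcoeq : ∀ {R X Y : C} (a b : R ⟶ X) (f : X ⟶ Y), IsPullback a b f f →
      HasCoequalizer a b)
    (hstable : ∀ {P X Y Z : C} (fst : P ⟶ X) (snd : P ⟶ Y) (f : X ⟶ Z) (g : Y ⟶ Z),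
      IsPullback fst snd f g → Nonempty (RegularEpi g) → Nonempty (RegularEpi fst))
    (heff : ∀ {R X : C} (r₁ r₂ : R ⟶ X), IsEquivalenceRelationPair r₁ r₂ →
      ∃ (Y : C) (f : X ⟶ Y), IsPullback r₁ r₂ f f) :
    (∀ {A B : C} (m : A ⟶ B), IsSplitMono m → Coextensive m) ↔
      (∀ {A B : C} (f : A ⟶ B), Coextensive f) := by
  refine ⟨fun hsplit A B f => ?_, fun h _ _ m _ => h m⟩
  have : BarrExact C :=
    { hasCoequalizer_of_isKernelPair := hcoeq _ _ _
      regularEpiIsStableUnderBaseChange :=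
        { of_isPullback := fun sq hg => ⟨hstable _ _ _ _ sq.flip hg.1⟩ }
      exists_isKernelPair := heff _ _ }
  have hid (X : C) : SatC2 (𝟙 X) := (hsplit (𝟙 X) inferInstance).2
  have (X : C) : StrongEpi (terminal.from X) := strongEpi_terminal_from hid X
  exact SatC1.coextensive (satC1_of_satC1_splitMono (fun m hm => (hsplit m hm).1) f) (hid B)
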